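/- arXiv:1011.2157 — 2 statements merged into one kernel-verified Lean document; each statement's English description precedes it below -/
import Mathlib

section
/- Let u = x_1^{a_1}⋯x_n^{a_n} with a_1 > 0 and v = x_1^{b_1}⋯x_n^{b_n} be monomials of degree d ≥ 2 with u ≥_lex v and v ≠ x_n^d, and let I = (L(u,v)) be a completely lexsegment ideal. Assume that either (a) b_1 < a_1 − 1, or (b) b_1 = a_1 − 1 and, for the largest monomial w of degree d with w <_lex v, one has x_1 w / x_{max(w)} ≤_lex u. Then for every N ≥ 1 the power I^N has linear quotients with respect to the order ≻ on its minimal monomial generators, where for monomials m, m' of the same degree one sets m ≻ m' if ν_1(m) < ν_1(m'), or ν_1(m) = ν_1(m') and m >_lex m'. -/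
/-! Write `β = ν_1(v)` and `B = L(u,v)`.

Let `a` precede `b` in `B^N`, and let `q > 1` be the first index with `ν_q(b) < ν_q(a)`.

If some `x_p` with `p > q` divides `b`, it divides some factor `f ∈ B` of `b`, and one of
`x_q f / x_p`, `x_q f / x_1` lies in `B` (`exchange`). Only `ν_1(f) = ν_1(u) = β + 1` needs the
condition on the successor of `v`: if `g = x_q f / x_1 <_lex v`, that condition forces
`x_1 g / x_p = x_q f / x_p ≤_lex u` (`lexLE_of_lexLT`). So `x_q b / x_p` or `x_q b / x_1` is a
generator, and it precedes `b`.

If no such `p` exists, then `ν_1(a) < ν_1(b)`, and `x_q b / x_1 ∈ B^N` (`lower_first`). This is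
clear when a factor of `b` has `x_1`-exponent at least `β + 2`. Otherwise `b` is a product of `k`
factors in the layer `T` of exponent `β + 1` and `N - k` in the layer `V` of exponent `β`, and `a`
has at least `N - k + 1` factors in `V`. Up to `x_1`, `T` is stable under replacing variables by
later ones and `V` under replacing them by earlier ones. Start from `x_q b / x_1 = A · Y` with `Y` a
product of `k - 1` elements of `T`, and sort the variables so that those of `A` come before those
of `Y`; `Y` stays such a product (`exists_sorted`). Since `b` has no variable after `x_q` and
`a` does not exceed `b` between `x_1` and `x_q`, the sorted `A` dominates a product of
`N - k + 1` factors of `a` from `V`, so it is itself such a product (`exists_of_dominates`). -/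

/-- Monomials of `K[x_1,…,x_n]`, encoded by their exponent vectors (`x_1` ↔ index `0`). -/
abbrev Mon (n : ℕ) := Fin n →₀ ℕ

/-- Total degree of a monomial. -/
def mdeg {n : ℕ} (m : Mon n) : ℕ := ∑ i, m i

/-- `m <_lex m'` (so `m' >_lex m`) with `x_1 > x_2 > ⋯ > x_n`: at the first index where the
exponent vectors differ, `m'` has the larger exponent. -/
def LexLT {n : ℕ} (m m' : Mon n) : Prop :=
  ∃ i : Fin n, (∀ j, j < i → m j = m' j) ∧ m i < m' i

/-- `m ≤_lex m'`. -/
def LexLE {n : ℕ} (m m' : Mon n) : Prop := m = m' ∨ LexLT m m'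

/-- `m >_revlex m'` for monomials of equal degree: at the last index where the exponent
vectors differ, `m` has the smaller exponent. -/
def RevLexGT {n : ℕ} (m m' : Mon n) : Prop :=
  ∃ s : Fin n, (∀ t, s < t → m t = m' t) ∧ m s < m' s

/-- The decreasing revlexicographic order on monomials: `m <_σ m'` iff `deg m < deg m'`, or
the degrees agree and `m >_revlex m'`. -/
def DecRevLexLT {n : ℕ} (m m' : Mon n) : Prop :=
  mdeg m < mdeg m' ∨ (mdeg m = mdeg m' ∧ RevLexGT m m')

/-- The lexsegment set `L(u,v) = {w ∈ M_d : u ≥_lex w ≥_lex v}`. -/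
def LSeg {n : ℕ} (u v : Mon n) (d : ℕ) : Set (Mon n) :=
  {w | mdeg w = d ∧ LexLE w u ∧ LexLE v w}

/-- `A` is a lexsegment set inside `M_e`. -/
def IsLexSegmentSet {n : ℕ} (A : Set (Mon n)) (e : ℕ) : Prop :=
  ∃ u v : Mon n, mdeg u = e ∧ mdeg v = e ∧ LexLE v u ∧ A = LSeg u v e

/-- `(L(u,v))` is a completely lexsegment ideal: for every `k ≥ 0` the `k`-th shadow
`{m·w : m ∈ M_k, w ∈ L(u,v)}` is a lexsegment set in `M_{d+k}`. -/
def IsCompletelyLex {n : ℕ} (u v : Mon n) (d : ℕ) : Prop :=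
  ∀ k : ℕ,
    IsLexSegmentSet {w | ∃ m w₀, mdeg m = k ∧ w₀ ∈ LSeg u v d ∧ w = m + w₀} (d + k)

/-- The set of products of `N` monomials from `B`; for `B` a set of monomials of a fixed
degree `d` this is the minimal monomial generating set of `I^N`, `I = (B)`. -/
def prodSet {n : ℕ} (B : Set (Mon n)) (N : ℕ) : Set (Mon n) :=
  {m | ∃ f : Fin N → Mon n, (∀ i, f i ∈ B) ∧ m = ∑ i, f i}

/-- The equigenerated monomial ideal with (minimal) monomial generating set `G` has linear
quotients with respect to the order given by `prec` (`prec a b` = "`a` is listed before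
`b`"): for generators `u_j` before `u_i` there are a generator `u_k` before `u_i` and a
variable `x_q` with `u_k / gcd(u_k,u_i) = x_q` and `x_q ∣ u_j / gcd(u_j,u_i)`. -/
def LinQuotOrder {n : ℕ} (G : Set (Mon n)) (prec : Mon n → Mon n → Prop) : Prop :=
  ∀ uj ∈ G, ∀ ui ∈ G, prec uj ui →
    ∃ uk ∈ G, prec uk ui ∧ ∃ q : Fin n,
      (∀ p : Fin n, p ≠ q → uk p ≤ ui p) ∧ uk q = ui q + 1 ∧ ui q < uj q

/-- The equigenerated monomial ideal with minimal monomial generating set `G` has linear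
quotients (with respect to some linear order of the generators). -/
def HasLinQuot {n : ℕ} (G : Set (Mon n)) : Prop :=
  ∃ prec : Mon n → Mon n → Prop,
    (∀ a ∈ G, ¬ prec a a) ∧
    (∀ a ∈ G, ∀ b ∈ G, ∀ c ∈ G, prec a b → prec b c → prec a c) ∧
    (∀ a ∈ G, ∀ b ∈ G, a ≠ b → prec a b ∨ prec b a) ∧
    LinQuotOrder G prec


/-! ### Elementary facts on degrees and the lexicographic order -/

lemma mdeg_add {n : ℕ} (a b : Mon n) : mdeg (a + b) = mdeg a + mdeg b := by
  simp [mdeg, Finset.sum_add_distrib]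

lemma mdeg_single {n : ℕ} (p : Fin n) : mdeg (Finsupp.single p 1) = 1 := by
  simp [mdeg, Finsupp.single_apply]

/-- The relation `y' = y · x_q / x_p`, written without subtraction. -/
def Move {n : ℕ} (p q : Fin n) (y y' : Mon n) : Prop :=
  y' + Finsupp.single p 1 = y + Finsupp.single q 1

lemma Move.apply {n : ℕ} {p q : Fin n} {y y' : Mon n} (h : Move p q y y') (j : Fin n) :
    y' j + (if p = j then 1 else 0) = y j + (if q = j then 1 else 0) := by
  have := DFunLike.congr_fun h j
  simpa [Finsupp.single_apply] using this

lemma Move.mdeg_eq {n : ℕ} {p q : Fin n} {y y' : Mon n} (h : Move p q y y') :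
    mdeg y' = mdeg y := by
  have := congrArg mdeg h
  simpa [mdeg_add, mdeg_single] using this

lemma exists_move {n : ℕ} (p q : Fin n) (y : Mon n) (h : 0 < y p) : ∃ y', Move p q y y' := by
  refine ⟨y + Finsupp.single q 1 - Finsupp.single p 1, ?_⟩
  ext j
  by_cases hj : p = j
  · subst hj; simp; omega
  · simp [hj]

lemma lexLT_iff {n : ℕ} (a b : Mon n) : LexLT a b ↔ toLex a < toLex b := by
  rw [Finsupp.Lex.lt_iff]; rfl

lemma lexLE_iff {n : ℕ} (a b : Mon n) : LexLE a b ↔ toLex a ≤ toLex b := by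
  rw [le_iff_eq_or_lt, ← lexLT_iff]; simp [LexLE]

lemma Move.lexLT {n : ℕ} {p q : Fin n} {y y' : Mon n} (h : Move p q y y') (hqp : q < p) :
    LexLT y y' := by
  refine ⟨q, fun j hj => ?_, ?_⟩
  · have := h.apply j
    rw [if_neg (by rintro rfl; exact absurd hj (not_lt.2 hqp.le)), if_neg hj.ne'] at this
    omega
  · have := h.apply q
    rw [if_neg hqp.ne', if_pos rfl] at this
    omega

lemma Move.lexLT' {n : ℕ} {p q : Fin n} {y y' : Mon n} (h : Move p q y y') (hpq : p < q) :
    LexLT y' y :=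
  Move.lexLT (p := q) (q := p) (y := y') (y' := y) (Eq.symm h) hpq

/-- A weak inequality in the coordinates before `l` and a strict one at `l` already decide the
lexicographic comparison. -/
lemma lexLT_of_le {n : ℕ} {a b : Mon n} (l : Fin n) (h : ∀ j, j < l → a j ≤ b j)
    (hl : a l < b l) : LexLT a b := by
  rw [lexLT_iff]
  by_contra hc
  rw [not_lt, ← lexLE_iff] at hc
  rcases hc with rfl | ⟨i, hi, hi'⟩
  · exact lt_irrefl _ hl
  · rcases lt_trichotomy i l with hil | rfl | hil
    · exact absurd hi' (not_lt.2 (h i hil))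
    · omega
    · have := hi l hil; omega

lemma lexLT_of_zero {n : ℕ} (hn : 0 < n) {a b : Mon n} (h : a ⟨0, hn⟩ < b ⟨0, hn⟩) :
    LexLT a b :=
  ⟨⟨0, hn⟩, fun j hj => absurd (Fin.lt_def.1 hj) (by simp), h⟩

lemma zero_le_of_lexLE {n : ℕ} (hn : 0 < n) {a b : Mon n} (h : LexLE a b) :
    a ⟨0, hn⟩ ≤ b ⟨0, hn⟩ := by
  by_contra hc
  have h1 := lexLT_of_zero hn (not_le.1 hc)
  rw [lexLT_iff] at h1
  rw [lexLE_iff] at h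
  exact absurd h1 (not_lt.2 h)

lemma finite_mdeg {n : ℕ} (d : ℕ) : {w : Mon n | mdeg w = d}.Finite := by
  refine (Set.finite_Iic (Finsupp.equivFunOnFinite.symm fun _ => d : Mon n)).subset ?_
  intro w hw j
  have : w j ≤ mdeg w := Finset.single_le_sum (f := fun i => w i) (fun _ _ => Nat.zero_le _)
    (Finset.mem_univ j)
  simp only [Set.mem_ofPred_eq] at hw
  simpa [hw] using this

/-! ### Products as multisets -/

lemma mem_prodSet_iff {n : ℕ} (B : Set (Mon n)) (N : ℕ) (m : Mon n) :
    m ∈ prodSet B N ↔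
      ∃ s : Multiset (Mon n), Multiset.card s = N ∧ (∀ x ∈ s, x ∈ B) ∧ s.sum = m := by
  constructor
  · rintro ⟨f, hf, rfl⟩
    refine ⟨Finset.univ.val.map f, by simp, ?_, rfl⟩
    intro x hx
    obtain ⟨i, -, rfl⟩ := Multiset.mem_map.1 hx
    exact hf i
  · rintro ⟨s, rfl, hs, rfl⟩
    induction s using Quotient.inductionOn with
    | h l =>
      refine ⟨fun i => l.get i, fun i => hs _ (List.get_mem l i), ?_⟩
      simp only [Multiset.quot_mk_to_coe, Multiset.sum_coe]
      conv_lhs => rw [← List.ofFn_get l, List.sum_ofFn]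
      rfl

lemma msum_apply {n : ℕ} (s : Multiset (Mon n)) (j : Fin n) :
    s.sum j = (s.map fun x => x j).sum :=
  map_multiset_sum (Finsupp.applyAddHom j) s

lemma exists_mem_of_sum_pos {n : ℕ} (s : Multiset (Mon n)) (j : Fin n) (h : 0 < s.sum j) :
    ∃ y ∈ s, 0 < y j := by
  by_contra hc
  push Not at hc
  rw [msum_apply, Multiset.sum_eq_zero] at h
  · exact lt_irrefl _ h
  · intro x hx
    obtain ⟨y, hy, rfl⟩ := Multiset.mem_map.1 hx
    exact Nat.le_zero.1 (hc y hy)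

lemma mdeg_sum {n d : ℕ} (s : Multiset (Mon n)) (h : ∀ y ∈ s, mdeg y = d) :
    mdeg s.sum = Multiset.card s * d := by
  induction s using Multiset.induction with
  | empty => simp [mdeg]
  | cons a s ih =>
    rw [Multiset.sum_cons, mdeg_add, ih fun y hy => h y (Multiset.mem_cons_of_mem hy),
      h a (Multiset.mem_cons_self a s), Multiset.card_cons]
    ring

lemma apply_sum {n b : ℕ} (j : Fin n) (s : Multiset (Mon n)) (h : ∀ y ∈ s, y j = b) :
    s.sum j = Multiset.card s * b := by
  induction s using Multiset.induction with
  | empty => simp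
  | cons a s ih =>
    rw [Multiset.sum_cons, Finsupp.add_apply, ih fun y hy => h y (Multiset.mem_cons_of_mem hy),
      h a (Multiset.mem_cons_self a s), Multiset.card_cons]
    ring

lemma le_apply_sum {n b : ℕ} (j : Fin n) (s : Multiset (Mon n)) (h : ∀ y ∈ s, b ≤ y j) :
    Multiset.card s * b ≤ s.sum j := by
  induction s using Multiset.induction with
  | empty => simp
  | cons a s ih =>
    rw [Multiset.sum_cons, Finsupp.add_apply, Multiset.card_cons]
    have := ih fun y hy => h y (Multiset.mem_cons_of_mem hy)
    have := h a (Multiset.mem_cons_self a s)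
    linarith

/-- Moving one variable inside one factor moves it in the product. -/
lemma move_sum {n : ℕ} {p q : Fin n} {s : Multiset (Mon n)} {y y' : Mon n} (hy : y ∈ s)
    (h : Move p q y y') : Move p q s.sum (y' ::ₘ s.erase y).sum := by
  have h1 := Multiset.sum_erase hy
  unfold Move at *
  rw [Multiset.sum_cons, ← h1, add_right_comm, h, add_right_comm]

lemma mem_prodSet_of_move {n N : ℕ} {B : Set (Mon n)} {p q : Fin n} {s : Multiset (Mon n)}
    (hc : Multiset.card s = N) (hs : ∀ x ∈ s, x ∈ B) {y y' : Mon n} (hy : y ∈ s)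
    (hy' : y' ∈ B) (h : Move p q y y') : ∃ m ∈ prodSet B N, Move p q s.sum m := by
  refine ⟨_, (mem_prodSet_iff B N _).2 ⟨y' ::ₘ s.erase y, ?_, ?_, rfl⟩, move_sum hy h⟩
  · rw [Multiset.card_cons, Multiset.card_erase_add_one hy, hc]
  · intro x hx
    rcases Multiset.mem_cons.1 hx with rfl | hx
    · exact hy'
    · exact hs x (Multiset.mem_of_mem_erase hx)

lemma exists_move_multiset {n : ℕ} {P : Mon n → Prop} {p q : Fin n}
    (hP : ∀ y y', P y → Move p q y y' → P y') (s : Multiset (Mon n)) (hs : ∀ y ∈ s, P y)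
    (hp : 0 < s.sum p) :
    ∃ s' : Multiset (Mon n), Multiset.card s' = Multiset.card s ∧ (∀ y ∈ s', P y) ∧
      Move p q s.sum s'.sum := by
  obtain ⟨y, hy, hyp⟩ := exists_mem_of_sum_pos s p hp
  obtain ⟨y', h⟩ := exists_move p q y hyp
  refine ⟨y' ::ₘ s.erase y, ?_, ?_, move_sum hy h⟩
  · rw [Multiset.card_cons, Multiset.card_erase_add_one hy]
  · intro x hx
    rcases Multiset.mem_cons.1 hx with rfl | hx
    · exact hP y _ (hs y hy) h
    · exact hs x (Multiset.mem_of_mem_erase hx)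

/-! ### Rearranging products by Borel moves -/

/-- The sum of the indices of the variables of `A`, counted with multiplicity; it decreases
when a variable is replaced by an earlier one. -/
def pot {n : ℕ} (A : Mon n) : ℕ := ∑ j : Fin n, j.val * A j

lemma pot_add {n : ℕ} (a b : Mon n) : pot (a + b) = pot a + pot b := by
  simp [pot, mul_add, Finset.sum_add_distrib]

lemma pot_single {n : ℕ} (p : Fin n) : pot (Finsupp.single p 1) = p := by
  simp [pot, Finsupp.single_apply]

lemma Move.pot_lt {n : ℕ} {p q : Fin n} {y y' : Mon n} (h : Move p q y y') (hqp : q < p) :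
    pot y' < pot y := by
  have := congrArg pot h
  simp only [pot_add, pot_single] at this
  have := Fin.lt_def.1 hqp
  omega

/-- If `P` is stable under replacing a variable (other than `x_1`) by a later one, then the
variables of `A · ∏ t`, with all `y ∈ t` in `P`, can be redistributed so that, up to `x_1`,
every variable of the product of `t'` comes weakly after every variable of `A'`. -/
lemma exists_sorted {n : ℕ} (hn : 0 < n) (P : Mon n → Prop)
    (hP : ∀ p q : Fin n, ⟨0, hn⟩ < p → p < q → ∀ y y', P y → Move p q y y' → P y')
    (A : Mon n) (t : Multiset (Mon n)) (ht : ∀ y ∈ t, P y) :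
    ∃ (A' : Mon n) (t' : Multiset (Mon n)), Multiset.card t' = Multiset.card t ∧
      (∀ y ∈ t', P y) ∧ A' + t'.sum = A + t.sum ∧
      ∀ p q : Fin n, ⟨0, hn⟩ < p → p < q → 0 < t'.sum p → A' q = 0 := by
  induction hk : pot A using Nat.strong_induction_on generalizing A t with
  | _ k ih =>
    by_cases hs : ∀ p q : Fin n, ⟨0, hn⟩ < p → p < q → 0 < t.sum p → A q = 0
    · exact ⟨A, t, rfl, ht, rfl, hs⟩
    · push Not at hs
      obtain ⟨p, q, h0, hpq, htp, hAq⟩ := hs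
      obtain ⟨t1, hc1, ht1, hm1⟩ := exists_move_multiset (hP p q h0 hpq) t ht htp
      obtain ⟨A1, hA1⟩ := exists_move q p A (Nat.pos_of_ne_zero hAq)
      obtain ⟨A2, t2, hc2, ht2, he2, hs2⟩ := ih (pot A1) (hk ▸ hA1.pot_lt hpq) A1 t1 ht1 rfl
      refine ⟨A2, t2, hc2.trans hc1, ht2, he2.trans ?_, hs2⟩
      unfold Move at hm1 hA1
      have : (A1 + t1.sum) + (Finsupp.single p 1 + Finsupp.single q 1)
          = (A + t.sum) + (Finsupp.single p 1 + Finsupp.single q 1) := by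
        calc _ = (A1 + Finsupp.single q 1) + (t1.sum + Finsupp.single p 1) := by abel
          _ = _ := by rw [hm1, hA1]; abel
      exact add_right_cancel this

lemma Move.psum {n : ℕ} {p q : Fin n} {y y' : Mon n} (h : Move p q y y') (r : Fin n) :
    ∑ j ∈ Finset.Iic r, y' j + (if p ≤ r then 1 else 0)
      = ∑ j ∈ Finset.Iic r, y j + (if q ≤ r then 1 else 0) := by
  have := Finset.sum_congr (rfl : Finset.Iic r = Finset.Iic r) fun j _ => h.apply j
  simpa [Finset.sum_add_distrib] using this

/-- If `P` is stable under replacing a variable by an earlier one (other than `x_1`) and the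
partial exponent sums of `A` dominate those of a product of elements of `P` of the same degree
and the same `x_1`-exponent, then `A` is a product of equally many elements of `P`. -/
lemma exists_of_dominates {n : ℕ} (hn : 0 < n) (P : Mon n → Prop)
    (hP : ∀ p q : Fin n, ⟨0, hn⟩ < q → q < p → ∀ y y', P y → Move p q y y' → P y')
    (A : Mon n) (t : Multiset (Mon n)) (ht : ∀ y ∈ t, P y) (hdeg : mdeg t.sum = mdeg A)
    (h0 : t.sum ⟨0, hn⟩ = A ⟨0, hn⟩)
    (hdom : ∀ r : Fin n, ∑ j ∈ Finset.Iic r, t.sum j ≤ ∑ j ∈ Finset.Iic r, A j) :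
    ∃ t' : Multiset (Mon n), Multiset.card t' = Multiset.card t ∧
      (∀ y ∈ t', P y) ∧ t'.sum = A := by
  induction hk : pot t.sum using Nat.strong_induction_on generalizing t with
  | _ k ih =>
    by_cases hA : ∀ j, t.sum j ≤ A j
    · refine ⟨t, rfl, ht, ?_⟩
      ext j
      exact (Finset.sum_eq_sum_iff_of_le fun i _ => hA i).1 hdeg j (Finset.mem_univ j)
    · push Not at hA
      -- `p` is the first index at which the product exceeds `A`
      obtain ⟨p, hp, hpmin⟩ := (Set.toFinite {j | A j < t.sum j}).exists_minimal hA
      have hlt : ∀ j, j < p → t.sum j ≤ A j := by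
        intro j hj
        by_contra hc
        exact absurd (hpmin (not_le.1 hc) hj.le) (not_le.2 hj)
      obtain ⟨q, hqp, hq⟩ : ∃ q, q < p ∧ t.sum q < A q := by
        by_contra hc
        push Not at hc
        refine absurd (hdom p) (not_le.2 (Finset.sum_lt_sum ?_ ⟨p, by simp, hp⟩))
        intro j hj
        rcases (Finset.mem_Iic.1 hj).lt_or_eq with hj | rfl
        · exact hc j hj
        · exact le_of_lt hp
      have hq0 : (⟨0, hn⟩ : Fin n) < q := by
        rcases Nat.eq_zero_or_pos q.val with h | h
        · have : q = ⟨0, hn⟩ := Fin.ext h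
          rw [this] at hq; omega
        · exact h
      have hpp : 0 < t.sum p := lt_of_le_of_lt (Nat.zero_le _) hp
      obtain ⟨t1, hc1, ht1, hm1⟩ := exists_move_multiset (hP p q hq0 hqp) t ht hpp
      have h01 := hm1.apply ⟨0, hn⟩
      rw [if_neg (hq0.trans hqp).ne', if_neg hq0.ne'] at h01
      obtain ⟨t2, hc2, ht2, he2⟩ := ih (pot t1.sum) (hk ▸ hm1.pot_lt hqp) t1 ht1
        (hm1.mdeg_eq.trans hdeg) (by omega) (by
          intro r
          have h1 := hm1.psum r
          have h2 := hdom r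
          by_cases hpr : p ≤ r
          · rw [if_pos hpr, if_pos (hqp.le.trans hpr)] at h1; omega
          · by_cases hqr : q ≤ r
            · have : ∑ j ∈ Finset.Iic r, t.sum j < ∑ j ∈ Finset.Iic r, A j :=
                Finset.sum_lt_sum
                  (fun j hj => hlt j (lt_of_le_of_lt (Finset.mem_Iic.1 hj) (not_le.1 hpr)))
                  ⟨q, Finset.mem_Iic.2 hqr, hq⟩
              rw [if_neg hpr, if_pos hqr] at h1; omega
            · rw [if_neg hpr, if_neg hqr] at h1; omega) rfl
      exact ⟨t2, hc2.trans hc1, ht2, he2⟩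

/-! ### Exchange inside the lexsegment -/

lemma mem_LSeg_of_between {n : ℕ} (hn : 0 < n) {d : ℕ} {u v w : Mon n} (hw : mdeg w = d)
    (h1 : v ⟨0, hn⟩ < w ⟨0, hn⟩) (h2 : w ⟨0, hn⟩ < u ⟨0, hn⟩) : w ∈ LSeg u v d :=
  ⟨hw, Or.inr (lexLT_of_zero hn h2), Or.inr (lexLT_of_zero hn h1)⟩

/-- The condition on the successor `w` of `v` passes to every `g <_lex v`: if `x_p`
divides `g`, then `x_1 g / x_p ≤_lex u`. This is because `x_1 g / x_p ≤_lex x_1 w / x_{max(w)}`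
whenever `g ≤_lex w`. -/
lemma lexLE_of_lexLT {n : ℕ} (hn : 0 < n) {d : ℕ} (hd : 2 ≤ d) {u v : Mon n}
    (hw : ∀ w : Mon n, mdeg w = d → LexLT w v →
      (∀ w' : Mon n, mdeg w' = d → LexLT w' v → LexLE w' w) →
      ∀ q : Fin n, q ∈ w.support → (∀ p ∈ w.support, p ≤ q) →
        LexLE (w + Finsupp.single (⟨0, hn⟩ : Fin n) 1 - Finsupp.single q 1) u)
    {g g' : Mon n} {p : Fin n} (hg : mdeg g = d) (hgv : LexLT g v)
    (hm : Move p ⟨0, hn⟩ g g') : LexLE g' u := by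
  obtain ⟨w, ⟨hwd, hwv⟩, hmax⟩ := Set.exists_max_image {w : Mon n | mdeg w = d ∧ LexLT w v}
    toLex ((finite_mdeg d).subset fun x hx => hx.1) ⟨g, hg, hgv⟩
  have hne : w.support.Nonempty := by
    rw [Finsupp.support_nonempty_iff]
    rintro rfl
    simp [mdeg] at hwd
    omega
  set q := w.support.max' hne with hq
  have hqs : q ∈ w.support := Finset.max'_mem _ _
  have hqm : ∀ p ∈ w.support, p ≤ q := fun p hp => Finset.le_max' _ _ hp
  have key := hw w hwd hwv (fun w' h1 h2 => (lexLE_iff _ _).2 (hmax w' ⟨h1, h2⟩)) q hqs hqm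
  set x := w + Finsupp.single (⟨0, hn⟩ : Fin n) 1 - Finsupp.single q 1 with hx
  have hxm : Move q ⟨0, hn⟩ w x := by
    have hwq : 0 < w q := Nat.pos_of_ne_zero (Finsupp.mem_support_iff.1 hqs)
    ext j
    by_cases hj : q = j
    · rw [hx, ← hj]; simp; omega
    · simp [hx, hj]
  by_contra hc
  rw [lexLE_iff, not_le] at hc
  rw [lexLE_iff] at key
  obtain ⟨l, hl, hl'⟩ := (lexLT_iff _ _).2 (lt_of_le_of_lt key hc)
  obtain ⟨l', hll', hxl'⟩ : ∃ l', l < l' ∧ g' l' < x l' := by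
    by_contra hcc
    push Not at hcc
    have : mdeg x < mdeg g' := by
      refine Finset.sum_lt_sum (fun j _ => ?_) ⟨l, Finset.mem_univ _, hl'⟩
      rcases lt_trichotomy j l with h | rfl | h
      · exact (hl j h).le
      · exact hl'.le
      · exact hcc j h
    rw [hxm.mdeg_eq, hm.mdeg_eq] at this
    omega
  have hl'0 : (⟨0, hn⟩ : Fin n) < l' := lt_of_le_of_lt (Fin.le_def.2 (Nat.zero_le _)) hll'
  have hlq : l < q := by
    refine lt_of_lt_of_le hll' (hqm l' (Finsupp.mem_support_iff.2 ?_))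
    have := hxm.apply l'
    rw [if_neg hl'0.ne] at this
    omega
  have hbefore : ∀ j, j ≤ l → x j = w j + (if (⟨0, hn⟩ : Fin n) = j then 1 else 0) := by
    intro j hj
    have := hxm.apply j
    rwa [if_neg (lt_of_le_of_lt hj hlq).ne', add_zero] at this
  have hwg : LexLT w g := by
    refine lexLT_of_le l (fun j hj => ?_) ?_
    · have h1 := hbefore j hj.le
      have h2 := hm.apply j
      have h3 := hl j hj
      omega
    · have h1 := hbefore l le_rfl
      have h2 := hm.apply l
      omega
  rw [lexLT_iff] at hwg
  exact absurd hwg (not_lt.2 (hmax g ⟨hg, hgv⟩))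

/-- The exchange property of a single generator `f`: for `1 < q < p` with `x_p ∣ f`, one of
`x_q f / x_p` and `x_q f / x_1` is again in the lexsegment. -/
lemma exchange {n : ℕ} (hn : 0 < n) {d : ℕ} (hd : 2 ≤ d) {u v : Mon n}
    (hab : v ⟨0, hn⟩ + 1 < u ⟨0, hn⟩ ∨
      (v ⟨0, hn⟩ + 1 = u ⟨0, hn⟩ ∧
        ∀ w : Mon n, mdeg w = d → LexLT w v →
          (∀ w' : Mon n, mdeg w' = d → LexLT w' v → LexLE w' w) →
          ∀ q : Fin n, q ∈ w.support → (∀ p ∈ w.support, p ≤ q) →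
            LexLE (w + Finsupp.single (⟨0, hn⟩ : Fin n) 1 - Finsupp.single q 1) u))
    {f : Mon n} (hf : f ∈ LSeg u v d) {p q : Fin n} (hq : ⟨0, hn⟩ < q) (hqp : q < p)
    (hp : 0 < f p) :
    (∃ f' ∈ LSeg u v d, Move p q f f') ∨ (∃ f' ∈ LSeg u v d, Move ⟨0, hn⟩ q f f') := by
  obtain ⟨hfd, hfu, hfv⟩ := hf
  have hu0 := zero_le_of_lexLE hn hfu
  have hv0 := zero_le_of_lexLE hn hfv
  obtain ⟨f', hf'⟩ := exists_move p q f hp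
  have hf'0 := hf'.apply ⟨0, hn⟩
  rw [if_neg (hq.trans hqp).ne', if_neg hq.ne'] at hf'0
  have hf'd := hf'.mdeg_eq.trans hfd
  have hvf' : LexLE v f' := by
    have h1 := hf'.lexLT hqp
    rw [lexLT_iff] at h1
    rw [lexLE_iff] at *
    exact hfv.trans h1.le
  by_cases hu : f ⟨0, hn⟩ < u ⟨0, hn⟩
  · exact Or.inl ⟨f', ⟨hf'd, Or.inr (lexLT_of_zero hn (by omega)), hvf'⟩, hf'⟩
  · obtain ⟨g, hg⟩ := exists_move ⟨0, hn⟩ q f (by omega)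
    have hg0 := hg.apply ⟨0, hn⟩
    rw [if_pos rfl, if_neg hq.ne'] at hg0
    have hgd := hg.mdeg_eq.trans hfd
    rcases hab with hab | ⟨hab, hw⟩
    · exact Or.inr ⟨g, mem_LSeg_of_between hn hgd (by omega) (by omega), hg⟩
    · by_cases hgv : LexLT g v
      · refine Or.inl ⟨f', ⟨hf'd, ?_, hvf'⟩, hf'⟩
        refine lexLE_of_lexLT hn hd hw (p := p) hgd hgv ?_
        unfold Move at *
        rw [hf', hg]
      · refine Or.inr ⟨g, ⟨hgd, Or.inr (lexLT_of_zero hn (by omega)), ?_⟩, hg⟩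
        rw [lexLT_iff, not_lt, ← lexLE_iff] at hgv
        exact hgv

/-! ### Linear quotients of the powers -/

/-- Suppose `a, b ∈ L(u,v)^N`, `ν_1(a) < ν_1(b)`, the variables `x_j` with `1 < j < q` do not
occur more often in `a` than in `b`, and those with `j > q` do not occur in `b`. Then
`x_q b / x_1 ∈ L(u,v)^N`. -/
lemma lower_first {n : ℕ} (hn : 0 < n) {d : ℕ} {u v : Mon n} (huv1 : v ⟨0, hn⟩ < u ⟨0, hn⟩)
    {N : ℕ} {a b : Mon n} (ha : a ∈ prodSet (LSeg u v d) N) (hb : b ∈ prodSet (LSeg u v d) N)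
    (hab : a ⟨0, hn⟩ < b ⟨0, hn⟩) {q : Fin n} (hq : ⟨0, hn⟩ < q)
    (hlow : ∀ j, ⟨0, hn⟩ < j → j < q → a j ≤ b j) (hhigh : ∀ j, q < j → b j = 0) :
    ∃ m ∈ prodSet (LSeg u v d) N, Move ⟨0, hn⟩ q b m := by
  obtain ⟨s, hsc, hs, rfl⟩ := (mem_prodSet_iff _ _ _).1 hb
  obtain ⟨g, hgc, hg, rfl⟩ := (mem_prodSet_iff _ _ _).1 ha
  by_cases hbig : ∃ f ∈ s, v ⟨0, hn⟩ + 1 < f ⟨0, hn⟩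
  · obtain ⟨f, hfs, hf⟩ := hbig
    obtain ⟨f', hf'⟩ := exists_move ⟨0, hn⟩ q f (by omega)
    have h0 := hf'.apply ⟨0, hn⟩
    rw [if_pos rfl, if_neg hq.ne'] at h0
    have hu0 := zero_le_of_lexLE hn (hs f hfs).2.1
    exact mem_prodSet_of_move hsc hs hfs (mem_LSeg_of_between hn
      (hf'.mdeg_eq.trans (hs f hfs).1) (by omega) (by omega)) hf'
  push Not at hbig
  set β := v ⟨0, hn⟩ with hβ
  -- the two layers of the lexsegment that matter: exponent of `x_1` equal to `β`, or `β + 1`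
  let PV : Mon n → Prop := fun w => mdeg w = d ∧ w ⟨0, hn⟩ = β ∧ LexLE v w
  let PT : Mon n → Prop := fun w => mdeg w = d ∧ w ⟨0, hn⟩ = β + 1 ∧ LexLE w u
  have hPV : ∀ p q : Fin n, ⟨0, hn⟩ < q → q < p → ∀ y y', PV y → Move p q y y' → PV y' := by
    rintro p q hq hqp y y' ⟨h1, h2, h3⟩ hm
    have h0 := hm.apply ⟨0, hn⟩
    rw [if_neg (hq.trans hqp).ne', if_neg hq.ne'] at h0
    have h4 := hm.lexLT hqp
    rw [lexLT_iff] at h4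
    rw [lexLE_iff] at h3
    exact ⟨hm.mdeg_eq.trans h1, by omega, (lexLE_iff _ _).2 (h3.trans h4.le)⟩
  have hPT : ∀ p q : Fin n, ⟨0, hn⟩ < p → p < q → ∀ y y', PT y → Move p q y y' → PT y' := by
    rintro p q hp hpq y y' ⟨h1, h2, h3⟩ hm
    have h0 := hm.apply ⟨0, hn⟩
    rw [if_neg hp.ne', if_neg (hp.trans hpq).ne'] at h0
    have h4 := hm.lexLT' hpq
    rw [lexLT_iff] at h4
    rw [lexLE_iff] at h3
    exact ⟨hm.mdeg_eq.trans h1, by omega, (lexLE_iff _ _).2 (h4.le.trans h3)⟩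
  have hPVB : ∀ y, PV y → y ∈ LSeg u v d := fun y h =>
    ⟨h.1, Or.inr (lexLT_of_zero hn (by have := h.2.1; omega)), h.2.2⟩
  have hPTB : ∀ y, PT y → y ∈ LSeg u v d := fun y h =>
    ⟨h.1, h.2.2, Or.inr (lexLT_of_zero hn (by have := h.2.1; omega))⟩
  -- split the factors of `b` and of `a` according to the exponent of `x_1`
  set sT := s.filter (fun f => f ⟨0, hn⟩ = β + 1) with hsT
  set sV := s.filter (fun f => ¬ f ⟨0, hn⟩ = β + 1) with hsV
  set gV := g.filter (fun f => f ⟨0, hn⟩ = β) with hgV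
  set gR := g.filter (fun f => ¬ f ⟨0, hn⟩ = β) with hgR
  have hs_split : sT + sV = s := Multiset.filter_add_not _ s
  have hg_split : gV + gR = g := Multiset.filter_add_not _ g
  have hsTP : ∀ y ∈ sT, PT y := by
    intro y hy
    obtain ⟨h1, h2⟩ := Multiset.mem_filter.1 hy
    exact ⟨(hs y h1).1, h2, (hs y h1).2.1⟩
  have hsVP : ∀ y ∈ sV, PV y := by
    intro y hy
    obtain ⟨h1, h2⟩ := Multiset.mem_filter.1 hy
    have h3 := zero_le_of_lexLE hn (hs y h1).2.2
    have h4 := hbig y h1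
    exact ⟨(hs y h1).1, by omega, (hs y h1).2.2⟩
  have hgVP : ∀ y ∈ gV, PV y := by
    intro y hy
    obtain ⟨h1, h2⟩ := Multiset.mem_filter.1 hy
    exact ⟨(hg y h1).1, h2, (hg y h1).2.2⟩
  have hgR1 : ∀ y ∈ gR, β + 1 ≤ y ⟨0, hn⟩ := by
    intro y hy
    obtain ⟨h1, h2⟩ := Multiset.mem_filter.1 hy
    have h3 := zero_le_of_lexLE hn (hg y h1).2.2
    omega
  have hscard : Multiset.card sT + Multiset.card sV = N := by
    rw [← Multiset.card_add, hs_split, hsc]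
  have hgcard : Multiset.card gV + Multiset.card gR = N := by
    rw [← Multiset.card_add, hg_split, hgc]
  have hs_sum : s.sum = sT.sum + sV.sum := by rw [← Multiset.sum_add, hs_split]
  have hg_sum : g.sum = gV.sum + gR.sum := by rw [← Multiset.sum_add, hg_split]
  -- counting `x_1` shows that `a` has more factors in the layer `β` than `b`
  have hcount : Multiset.card sV + 1 ≤ Multiset.card gV := by
    have e1 := apply_sum ⟨0, hn⟩ sT (fun y hy => (hsTP y hy).2.1)
    have e2 := apply_sum ⟨0, hn⟩ sV (fun y hy => (hsVP y hy).2.1)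
    have e3 := apply_sum ⟨0, hn⟩ gV (fun y hy => (hgVP y hy).2.1)
    have e4 := le_apply_sum ⟨0, hn⟩ gR hgR1
    rw [hs_sum, hg_sum, Finsupp.add_apply, Finsupp.add_apply] at hab
    have e5 : (Multiset.card sT + Multiset.card sV) * β
        = (Multiset.card gV + Multiset.card gR) * β := by rw [hscard, hgcard]
    by_contra hc
    have : Multiset.card sT ≤ Multiset.card gR := by omega
    nlinarith
  obtain ⟨C, hC⟩ : ∃ C, C ∈ Multiset.powersetCard (Multiset.card sV + 1) gV := by
    rw [← Multiset.card_pos_iff_exists_mem, Multiset.card_powersetCard]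
    exact Nat.choose_pos hcount
  obtain ⟨hCle, hCc⟩ := Multiset.mem_powersetCard.1 hC
  have hCP : ∀ y ∈ C, PV y := fun y hy => hgVP y (Multiset.mem_of_le hCle hy)
  have hCsum : ∀ j, C.sum j ≤ g.sum j := by
    intro j
    obtain ⟨D, hD⟩ := Multiset.le_iff_exists_add.1 (hCle.trans (Multiset.filter_le _ g))
    rw [hD, Multiset.sum_add, Finsupp.add_apply]
    omega
  obtain ⟨y, hy⟩ : ∃ y, y ∈ sT := by
    apply Multiset.card_pos_iff_exists_mem.1
    omega
  obtain ⟨s0, hs0⟩ := Multiset.exists_cons_of_mem hy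
  obtain ⟨y', hy'⟩ := exists_move ⟨0, hn⟩ q y (by have := (hsTP y hy).2.1; omega)
  have hy'0 := hy'.apply ⟨0, hn⟩
  rw [if_pos rfl, if_neg hq.ne'] at hy'0
  have hs0c : Multiset.card sT = Multiset.card s0 + 1 := by rw [hs0, Multiset.card_cons]
  obtain ⟨A, t, htc, ht, hAt, hsort⟩ := exists_sorted hn PT hPT (y' + sV.sum) s0
    (fun z hz => hsTP z (by rw [hs0]; exact Multiset.mem_cons_of_mem hz))
  have hm : Move ⟨0, hn⟩ q s.sum (A + t.sum) := by
    rw [hAt, hs_sum, hs0, Multiset.sum_cons]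
    unfold Move at *
    calc _ = (y' + Finsupp.single ⟨0, hn⟩ 1) + (sV.sum + s0.sum) := by abel
      _ = _ := by rw [hy']; abel
  have hCdeg := mdeg_sum C (fun y hy => (hCP y hy).1)
  have hC0 := apply_sum ⟨0, hn⟩ C (fun y hy => (hCP y hy).2.1)
  rw [hCc] at hCdeg hC0
  have hs0P : ∀ z ∈ s0, PT z := fun z hz => hsTP z (by rw [hs0]; exact Multiset.mem_cons_of_mem hz)
  have hAdeg : mdeg C.sum = mdeg A := by
    have e1 := congrArg mdeg hAt
    rw [mdeg_add, mdeg_add, mdeg_add, mdeg_sum t (fun y hy => (ht y hy).1),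
      mdeg_sum s0 (fun y hy => (hs0P y hy).1), mdeg_sum sV (fun y hy => (hsVP y hy).1),
      hy'.mdeg_eq, (hsTP y hy).1, htc] at e1
    rw [hCdeg]
    linarith
  have hA0 : C.sum ⟨0, hn⟩ = A ⟨0, hn⟩ := by
    have e1 := DFunLike.congr_fun hAt ⟨0, hn⟩
    rw [Finsupp.add_apply, Finsupp.add_apply, Finsupp.add_apply,
      apply_sum _ t (fun y hy => (ht y hy).2.1), apply_sum _ s0 (fun y hy => (hs0P y hy).2.1),
      apply_sum _ sV (fun y hy => (hsVP y hy).2.1), htc] at e1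
    have := (hsTP y hy).2.1
    rw [hC0]
    have : y' ⟨0, hn⟩ = β := by omega
    linarith
  have hfull : ∀ r : Fin n, (∀ j, r < j → A j = 0) →
      ∑ j ∈ Finset.Iic r, C.sum j ≤ ∑ j ∈ Finset.Iic r, A j := by
    intro r hr
    have e1 : ∑ j ∈ Finset.Iic r, A j = mdeg A := by
      refine Finset.sum_subset (Finset.subset_univ _) fun j _ hj => hr j ?_
      simpa using hj
    rw [e1, ← hAdeg]
    exact Finset.sum_le_sum_of_subset (Finset.subset_univ _)
  have hdom : ∀ r : Fin n, ∑ j ∈ Finset.Iic r, C.sum j ≤ ∑ j ∈ Finset.Iic r, A j := by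
    intro r
    by_cases hqr : q ≤ r
    · refine hfull r fun j hj => ?_
      have h1 := hm.apply j
      have h2 := hhigh j (lt_of_le_of_lt hqr hj)
      rw [if_neg (lt_of_le_of_lt hqr hj).ne, Finsupp.add_apply] at h1
      omega
    by_cases hex : ∃ p, ⟨0, hn⟩ < p ∧ p ≤ r ∧ 0 < t.sum p
    · obtain ⟨p, hp0, hpr, hp⟩ := hex
      exact hfull r fun j hj => hsort p j hp0 (lt_of_le_of_lt hpr hj) hp
    · push Not at hex
      refine Finset.sum_le_sum fun j hj => ?_
      have hjr := Finset.mem_Iic.1 hj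
      rcases Nat.eq_zero_or_pos j.val with h | h
      · have : j = ⟨0, hn⟩ := Fin.ext h
        rw [this, hA0]
      · have hj0 : (⟨0, hn⟩ : Fin n) < j := h
        have hjq : j < q := lt_of_le_of_lt hjr (not_le.1 hqr)
        have h1 := hex j hj0 hjr
        have h2 := hm.apply j
        rw [if_neg hj0.ne, if_neg hjq.ne', Finsupp.add_apply] at h2
        have h3 := hlow j hj0 hjq
        have h4 := hCsum j
        omega
  obtain ⟨E, hEc, hE, rfl⟩ := exists_of_dominates hn PV hPV A C hCP hAdeg hA0 hdom
  refine ⟨_, (mem_prodSet_iff _ _ _).2 ⟨E + t, ?_, ?_, Multiset.sum_add E t⟩, hm⟩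
  · rw [Multiset.card_add, hEc, htc, hCc]; omega
  · intro x hx
    rcases Multiset.mem_add.1 hx with hx | hx
    · exact hPVB x (hE x hx)
    · exact hPTB x (ht x hx)

/-- let `I = (L(u,v))` be a completely lexsegment ideal (with
`u = x_1^{a_1}⋯x_n^{a_n}`, `a_1 > 0`, `v = x_1^{b_1}⋯x_n^{b_n} ≠ x_n^d`, `u ≥_lex v`,
of degree `d ≥ 2`), and assume (a) `b_1 < a_1 - 1`, or (b) `b_1 = a_1 - 1` and for the
largest monomial `w` of degree `d` with `w <_lex v` one has `x_1·w/x_{max(w)} ≤_lex u`.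
Then every power `I^N`, `N ≥ 1`, has linear quotients with respect to the order `≻`,
where `m ≻ m'` iff `ν_1(m) < ν_1(m')`, or `ν_1(m) = ν_1(m')` and `m >_lex m'`. -/
theorem stmt6 {n : ℕ} (hn : 0 < n) (d : ℕ) (hd : 2 ≤ d) (u v : Mon n)
    (hud : mdeg u = d) (hvd : mdeg v = d)
    (ha1 : 0 < u ⟨0, hn⟩)
    (huv : LexLE v u)
    (hvne : v ≠ Finsupp.single (⟨n - 1, by omega⟩ : Fin n) d)
    (hcomp : IsCompletelyLex u v d)
    (hab : v ⟨0, hn⟩ + 1 < u ⟨0, hn⟩ ∨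
      (v ⟨0, hn⟩ + 1 = u ⟨0, hn⟩ ∧
        ∀ w : Mon n, mdeg w = d → LexLT w v →
          (∀ w' : Mon n, mdeg w' = d → LexLT w' v → LexLE w' w) →
          ∀ q : Fin n, q ∈ w.support → (∀ p ∈ w.support, p ≤ q) →
            LexLE (w + Finsupp.single (⟨0, hn⟩ : Fin n) 1 - Finsupp.single q 1) u)) :
    ∀ N : ℕ, 1 ≤ N →
      LinQuotOrder (prodSet (LSeg u v d) N)
        (fun a b => a ⟨0, hn⟩ < b ⟨0, hn⟩ ∨ (a ⟨0, hn⟩ = b ⟨0, hn⟩ ∧ LexLT b a)) := by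
  intro N _ a ha b hb hprec
  have huv1 : v ⟨0, hn⟩ < u ⟨0, hn⟩ := by
    rcases hab with h | ⟨h, -⟩ <;> omega
  have hdeg : mdeg a = mdeg b := by
    obtain ⟨s, hsc, hs, rfl⟩ := (mem_prodSet_iff _ _ _).1 ha
    obtain ⟨t, htc, ht, rfl⟩ := (mem_prodSet_iff _ _ _).1 hb
    rw [mdeg_sum s fun y hy => (hs y hy).1, mdeg_sum t fun y hy => (ht y hy).1, hsc, htc]
  have hpos : ∀ j : Fin n, j ≠ ⟨0, hn⟩ → (⟨0, hn⟩ : Fin n) < j := fun j hj =>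
    Nat.pos_of_ne_zero fun h => hj (Fin.ext h)
  have hne : {j : Fin n | ⟨0, hn⟩ < j ∧ b j < a j}.Nonempty := by
    rcases hprec with h | ⟨h, i, -, hi⟩
    · by_contra hc
      have hle : ∀ j, a j ≤ b j := by
        intro j
        by_cases hj : j = ⟨0, hn⟩
        · rw [hj]; exact h.le
        · by_contra hj'
          exact hc ⟨j, hpos j hj, not_le.1 hj'⟩
      have : mdeg a < mdeg b := Finset.sum_lt_sum (fun j _ => hle j) ⟨_, Finset.mem_univ _, h⟩
      omega
    · refine ⟨i, hpos i ?_, hi⟩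
      rintro rfl
      omega
  obtain ⟨q, ⟨hq0, hq⟩, hqmin⟩ := (Set.toFinite _).exists_minimal hne
  have hlow : ∀ j, ⟨0, hn⟩ < j → j < q → a j ≤ b j := by
    intro j h0 hj
    by_contra hc
    exact absurd (hqmin ⟨h0, not_le.1 hc⟩ hj.le) (not_le.2 hj)
  have fin_move : ∀ (p : Fin n) (m : Mon n), p ≠ q → Move p q b m →
      (∀ j : Fin n, j ≠ q → m j ≤ b j) ∧ m q = b q + 1 ∧ b q < a q := by
    intro p m hpq hm
    refine ⟨fun j hj => ?_, ?_, hq⟩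
    · have := hm.apply j
      rw [if_neg hj.symm] at this
      omega
    · have := hm.apply q
      rw [if_neg hpq, if_pos rfl] at this
      omega
  have fin_first : (∃ m ∈ prodSet (LSeg u v d) N, Move ⟨0, hn⟩ q b m) →
      ∃ m ∈ prodSet (LSeg u v d) N,
        (m ⟨0, hn⟩ < b ⟨0, hn⟩ ∨ (m ⟨0, hn⟩ = b ⟨0, hn⟩ ∧ LexLT b m)) ∧
          ∃ q : Fin n, (∀ j : Fin n, j ≠ q → m j ≤ b j) ∧ m q = b q + 1 ∧ b q < a q := by
    rintro ⟨m, hm, hmove⟩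
    have h0 := hmove.apply ⟨0, hn⟩
    rw [if_pos rfl, if_neg hq0.ne'] at h0
    exact ⟨m, hm, Or.inl (by omega), q, fin_move _ m hq0.ne hmove⟩
  by_cases hex : ∃ p, q < p ∧ 0 < b p
  · obtain ⟨p, hqp, hbp⟩ := hex
    obtain ⟨s, hsc, hs, rfl⟩ := (mem_prodSet_iff _ _ _).1 hb
    obtain ⟨f, hfs, hfp⟩ := exists_mem_of_sum_pos s p hbp
    rcases exchange hn hd hab (hs f hfs) hq0 hqp hfp with ⟨f', hf', hmv⟩ | ⟨f', hf', hmv⟩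
    · obtain ⟨m, hm, hmove⟩ := mem_prodSet_of_move hsc hs hfs hf' hmv
      have h0 := hmove.apply ⟨0, hn⟩
      rw [if_neg (hq0.trans hqp).ne', if_neg hq0.ne'] at h0
      exact ⟨m, hm, Or.inr ⟨by omega, hmove.lexLT hqp⟩, q, fin_move p m hqp.ne' hmove⟩
    · exact fin_first (mem_prodSet_of_move hsc hs hfs hf' hmv)
  · push Not at hex
    have hhigh : ∀ j, q < j → b j = 0 := fun j hj => Nat.le_zero.1 (hex j hj)
    refine fin_first (lower_first hn huv1 ha hb ?_ hq0 hlow hhigh)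
    rcases hprec with h | ⟨h, i, hi, hi'⟩
    · exact h
    · -- with equal `x_1`-exponents, `a` would dominate `b` everywhere, against equal degrees
      exfalso
      have hi0 : i ≠ ⟨0, hn⟩ := by rintro rfl; omega
      have hqi : q ≤ i := by
        by_contra hc
        exact hc (hqmin ⟨hpos i hi0, hi'⟩ (not_le.1 hc).le)
      have : mdeg b < mdeg a := by
        refine Finset.sum_lt_sum (fun j _ => ?_) ⟨q, Finset.mem_univ _, hq⟩
        rcases lt_or_ge j i with hj | hj
        · exact (hi j hj).le
        · rcases hj.eq_or_lt with rfl | hj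
          · exact hi'.le
          · rw [hhigh j (lt_of_le_of_lt hqi hj)]; exact Nat.zero_le _
      omega
end

section
/- Let I ⊂ S be a monomial ideal generated in degree d with minimal monomial generating set B = G(I). If there exist a monomial order <^# on R = K[{T_u}_{u∈B}] and a monomial order <_σ on S such that B satisfies the σ-exchange property with respect to <^#, then I is of fiber type: the toric ideal P = ker φ of the Rees algebra of I is generated by P ∩ K[{T_u}_{u∈B}] together with the elements of P that are homogeneous of degree 1 in the variables T_u. -/
/-- A monomial order on a polynomial ring with variables indexed by `α`, given as a strict
total order on exponent vectors which is compatible with multiplication of monomials and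
for which `1` is the smallest monomial. -/
structure MonOrd (α : Type*) where
  lt : (α →₀ ℕ) → (α →₀ ℕ) → Prop
  irrefl : ∀ a, ¬ lt a a
  trans : ∀ a b c, lt a b → lt b c → lt a c
  total : ∀ a b, a ≠ b → lt a b ∨ lt b a
  add_right : ∀ a b c, lt a b → lt (a + c) (b + c)
  zero_lt : ∀ a, a ≠ 0 → lt 0 a

/-- The map `π : R = K[{T_u}_{u ∈ B}] → S`, `T_u ↦ u`. -/
noncomputable def piB {n : ℕ} (K : Type*) [Field K] (B : Set (Mon n)) :
    MvPolynomial ↥B K →ₐ[K] MvPolynomial (Fin n) K :=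
  MvPolynomial.aeval (fun u : ↥B => MvPolynomial.monomial (u : Mon n) (1 : K))

/-- The toric ideal `J = ker π` of `K[B]`. -/
noncomputable def toricJ {n : ℕ} (K : Type*) [Field K] (B : Set (Mon n)) :
    Ideal (MvPolynomial ↥B K) :=
  RingHom.ker (piB K B).toRingHom

/-- `m` is the leading monomial of `f ≠ 0` with respect to the order `lt` on exponent
vectors. -/
def IsLeadMon {α K : Type*} [CommSemiring K] (lt : (α →₀ ℕ) → (α →₀ ℕ) → Prop)
    (f : MvPolynomial α K) (m : α →₀ ℕ) : Prop :=
  m ∈ f.support ∧ ∀ m' ∈ f.support, m' ≠ m → lt m' m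

/-- `m` is a standard monomial of the ideal `J` with respect to the order `lt`: it is not
the leading monomial of any nonzero element of `J`. -/
def IsStdMon {α K : Type*} [CommSemiring K] (lt : (α →₀ ℕ) → (α →₀ ℕ) → Prop)
    (J : Ideal (MvPolynomial α K)) (m : α →₀ ℕ) : Prop :=
  ∀ f ∈ J, f ≠ 0 → ¬ IsLeadMon lt f m

/-- The image in `S` of a monomial `T_{u_1} ⋯ T_{u_N}` of `R`, i.e. the product
`u_1 ⋯ u_N`. -/
noncomputable def expandB {n : ℕ} {B : Set (Mon n)} (e : ↥B →₀ ℕ) : Mon n :=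
  e.sum fun u k => k • (u : Mon n)

/-- The number `N` of factors of a monomial `T_{u_1} ⋯ T_{u_N}` of `R`. -/
def edeg {n : ℕ} {B : Set (Mon n)} (e : ↥B →₀ ℕ) : ℕ := e.sum fun _ k => k

/-- `B` satisfies the σ-exchange property (with respect to the order `ltσ` on the monomials
of `S` and the order `ltR` on the monomials of `R = K[{T_u}_{u∈B}]`): whenever
`T_{u_1}⋯T_{u_N}` and `T_{v_1}⋯T_{v_N}` are standard monomials of `J` with
`u_1⋯u_N <_σ v_1⋯v_N`, there are a factor `u_δ`, a `q ∈ supp(v_1⋯v_N)` and a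
`j ∈ supp(u_δ)` with `ν_q(u_1⋯u_N) < ν_q(v_1⋯v_N)`, `x_j <_σ x_q` and
`x_q u_δ / x_j ∈ B`. -/
def SigmaExchange {n : ℕ} (K : Type*) [Field K] (B : Set (Mon n))
    (ltσ : Mon n → Mon n → Prop)
    (ltR : (↥B →₀ ℕ) → (↥B →₀ ℕ) → Prop) : Prop :=
  ∀ e e' : ↥B →₀ ℕ, edeg e = edeg e' →
    IsStdMon ltR (toricJ K B) e → IsStdMon ltR (toricJ K B) e' →
    ltσ (expandB e) (expandB e') →
    ∃ uδ : ↥B, 0 < e uδ ∧ ∃ q j : Fin n,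
      expandB e q < expandB e' q ∧
      0 < (uδ : Mon n) j ∧
      ltσ (Finsupp.single j 1) (Finsupp.single q 1) ∧
      ((uδ : Mon n) + Finsupp.single q 1 - Finsupp.single j 1) ∈ B

/-- The map `φ : 𝒯 = K[x_1,…,x_n,{T_u}_{u∈B}] → S[t]`, `x_i ↦ x_i`, `T_u ↦ u·t`; its image
is the Rees algebra of `I = (B)`. -/
noncomputable def reesPhi {n : ℕ} (K : Type*) [Field K] (B : Set (Mon n)) :
    MvPolynomial (Fin n ⊕ ↥B) K →ₐ[K] Polynomial (MvPolynomial (Fin n) K) :=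
  MvPolynomial.aeval (Sum.elim
    (fun i : Fin n => Polynomial.C (MvPolynomial.X i))
    (fun u : ↥B => Polynomial.C (MvPolynomial.monomial (u : Mon n) (1 : K)) * Polynomial.X))

/-- The toric ideal `P = ker φ` of the Rees algebra of `I = (B)`. -/
noncomputable def reesP {n : ℕ} (K : Type*) [Field K] (B : Set (Mon n)) :
    Ideal (MvPolynomial (Fin n ⊕ ↥B) K) :=
  RingHom.ker (reesPhi K B).toRingHom

/-- `f ∈ 𝒯` only involves the variables `T_u`, i.e. `f ∈ K[{T_u}_{u∈B}]`. -/
def OnlyT {n : ℕ} {K : Type*} [Field K] {B : Set (Mon n)}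
    (f : MvPolynomial (Fin n ⊕ ↥B) K) : Prop :=
  ∀ m ∈ f.support, ∀ i : Fin n, m (Sum.inl i) = 0

/-- `f ∈ 𝒯` is homogeneous of degree `1` in the variables `T_u`. -/
def TDegOne {n : ℕ} {K : Type*} [Field K] {B : Set (Mon n)}
    (f : MvPolynomial (Fin n ⊕ ↥B) K) : Prop :=
  ∀ m ∈ f.support, (∑ s ∈ m.support, if s.isRight then m s else 0) = 1

/-- The monomial ideal `I = (B)` is of fiber type: the toric ideal `P` of its Rees algebra
is generated by `P ∩ K[{T_u}_{u∈B}]` together with the elements of `P` homogeneous of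
degree `1` in the variables `T_u`. -/
def IsFiberType {n : ℕ} (K : Type*) [Field K] (B : Set (Mon n)) : Prop :=
  reesP K B =
    Ideal.span ({f | f ∈ reesP K B ∧ OnlyT f} ∪ {f | f ∈ reesP K B ∧ TDegOne f})

/-- The `S`-part of a monomial of `𝒯`. -/
noncomputable def sPart {n : ℕ} {B : Set (Mon n)} (m : (Fin n ⊕ ↥B) →₀ ℕ) : Mon n :=
  (Finsupp.sumFinsuppEquivProdFinsupp m).1

/-- The `T`-part of a monomial of `𝒯`. -/
noncomputable def tPart {n : ℕ} {B : Set (Mon n)} (m : (Fin n ⊕ ↥B) →₀ ℕ) : ↥B →₀ ℕ :=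
  (Finsupp.sumFinsuppEquivProdFinsupp m).2

/-- The product order `<_σ^#` on the monomials of `𝒯 = K[x_1,…,x_n,{T_u}_{u∈B}]`. -/
def ProdLT {n : ℕ} {B : Set (Mon n)} (ltσ : Mon n → Mon n → Prop)
    (ltR : (↥B →₀ ℕ) → (↥B →₀ ℕ) → Prop)
    (m m' : (Fin n ⊕ ↥B) →₀ ℕ) : Prop :=
  ltσ (sPart m) (sPart m') ∨ (sPart m = sPart m' ∧ ltR (tPart m) (tPart m'))

/-- `G` is a Gröbner basis of the ideal `P` with respect to the order `lt`: the leading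
monomial of every nonzero `f ∈ P` is divisible by the leading monomial of some element
of `G`. -/
def IsGB {α K : Type*} [CommSemiring K] (lt : (α →₀ ℕ) → (α →₀ ℕ) → Prop)
    (P : Ideal (MvPolynomial α K)) (G : Set (MvPolynomial α K)) : Prop :=
  ∀ f ∈ P, f ≠ 0 → ∃ g ∈ G, g ≠ 0 ∧
    ∃ mg mf, IsLeadMon lt g mg ∧ IsLeadMon lt f mf ∧ mg ≤ mf

/-! ### Monomial orders -/

/-- Monomial orders in finitely many variables are well-founded, by Dickson's lemma. -/
theorem MonOrd.wf {α : Type*} [Finite α] (o : MonOrd α) : WellFounded o.lt := by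
  rw [wellFounded_iff_isEmpty_descending_chain]
  refine ⟨fun ⟨f, hf⟩ => ?_⟩
  have hlt : ∀ m k, o.lt (f (m + k + 1)) (f m) := by
    intro m k
    induction k with
    | zero => exact hf m
    | succ k ih => exact o.trans _ _ _ (hf _) ih
  obtain ⟨m, p, hmp, hle⟩ := wellQuasiOrdered_le f
  obtain ⟨k, rfl⟩ : ∃ k, p = m + k + 1 := ⟨p - m - 1, by omega⟩
  have h1 := hlt m k
  obtain ⟨c, hc⟩ := exists_add_of_le hle
  by_cases hc0 : c = 0
  · rw [hc, hc0, add_zero] at h1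
    exact o.irrefl _ h1
  · have h2 := o.add_right _ _ (f m) (o.zero_lt c hc0)
    rw [zero_add, add_comm c, ← hc] at h2
    exact o.irrefl _ (o.trans _ _ _ h1 h2)

/-- If two products of monomials agree, the one with the larger first factor has the smaller
second factor. -/
theorem MonOrd.lt_of_add_eq {α : Type*} (o : MonOrd α) {a b c c' : α →₀ ℕ}
    (h : a + c = b + c') (hlt : o.lt b a) : o.lt c c' := by
  by_cases hcc : c = c'
  · subst hcc
    rw [add_right_cancel h] at hlt
    exact (o.irrefl _ hlt).elim
  rcases o.total c c' hcc with h1 | h1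
  · exact h1
  · have h2 := o.add_right _ _ c hlt
    have h3 := o.add_right _ _ b h1
    rw [add_comm c' b, add_comm c b, ← h] at h3
    exact (o.irrefl _ (o.trans _ _ _ h3 h2)).elim

/-! ### Products of generators -/

section Expand
variable {n : ℕ} {B : Set (Mon n)}

theorem expandB_zero : expandB (0 : ↥B →₀ ℕ) = 0 := Finsupp.sum_zero_index

theorem expandB_add (e e' : ↥B →₀ ℕ) : expandB (e + e') = expandB e + expandB e' :=
  Finsupp.sum_add_index' (fun _ => zero_smul _ _) (fun _ _ _ => add_smul _ _ _)

theorem expandB_single (u : ↥B) : expandB (Finsupp.single u 1) = (u : Mon n) := by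
  simp [expandB]

theorem edeg_add (e e' : ↥B →₀ ℕ) : edeg (e + e') = edeg e + edeg e' :=
  Finsupp.sum_add_index' (fun _ => rfl) (fun _ _ _ => rfl)

theorem edeg_single (u : ↥B) : edeg (Finsupp.single u 1) = 1 := by
  simp [edeg]

theorem mdeg_expandB {d : ℕ} (hBd : ∀ m ∈ B, mdeg m = d) (e : ↥B →₀ ℕ) :
    mdeg (expandB e) = edeg e * d := by
  have hsum : ∀ a b : Mon n, mdeg (a + b) = mdeg a + mdeg b := fun a b => by
    simp [mdeg, Finset.sum_add_distrib]
  induction e using Finsupp.induction_linear with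
  | zero => simp [expandB, edeg, mdeg]
  | add f g hf hg => rw [expandB_add, edeg_add, hsum, hf, hg, add_mul]
  | single u k =>
    have h := hBd u u.2
    simp only [mdeg] at h
    simp [expandB, edeg, mdeg, ← Finset.mul_sum, h]

theorem finite_of_mdeg {d : ℕ} (hBd : ∀ m ∈ B, mdeg m = d) : Finite ↥B := by
  refine Set.Finite.to_subtype
    ((Set.finite_Iic (Finsupp.equivFunOnFinite.symm fun _ : Fin n => d)).subset ?_)
  intro m hm i
  rw [Finsupp.equivFunOnFinite_symm_apply_apply, ← hBd m hm]
  exact Finset.single_le_sum (f := fun i => m i) (fun _ _ => Nat.zero_le _) (Finset.mem_univ i)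

end Expand

/-! ### Standard monomials -/

section Std
variable {n : ℕ} {B : Set (Mon n)} (K : Type*) [Field K]

theorem prod_monomial_pow (e : ↥B →₀ ℕ) :
    (e.prod fun u k => (MvPolynomial.monomial (u : Mon n) (1 : K)) ^ k)
      = MvPolynomial.monomial (expandB e) 1 := by
  rw [Finsupp.prod]
  simp only [MvPolynomial.monomial_pow, one_pow]
  rw [← MvPolynomial.monomial_sum_one]
  rfl

theorem piB_monomial (m : ↥B →₀ ℕ) (c : K) :
    piB K B (MvPolynomial.monomial m c) = MvPolynomial.monomial (expandB m) c := by
  rw [piB, MvPolynomial.aeval_monomial, MvPolynomial.algebraMap_eq, prod_monomial_pow,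
    MvPolynomial.C_mul_monomial, mul_one]

theorem coeff_piB (f : MvPolynomial ↥B K) (w : Mon n) :
    MvPolynomial.coeff w (piB K B f)
      = ∑ m ∈ f.support, if expandB m = w then MvPolynomial.coeff m f else 0 := by
  conv_lhs => rw [f.as_sum, map_sum, MvPolynomial.coeff_sum]
  refine Finset.sum_congr rfl fun m _ => ?_
  rw [piB_monomial, MvPolynomial.coeff_monomial]

/-- The `<^#`-smallest monomial with a given product is standard: a leading monomial of an
element of `J` shares its product with another monomial of that element. -/
theorem exists_std [Finite ↥B] (o : MonOrd ↥B) (e : ↥B →₀ ℕ) :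
    ∃ e', IsStdMon o.lt (toricJ K B) e' ∧ expandB e' = expandB e := by
  obtain ⟨e', he', hmin⟩ := o.wf.has_min {e' | expandB e' = expandB e} ⟨e, rfl⟩
  refine ⟨e', ?_, he'⟩
  rintro f hf - ⟨hsupp, hlead⟩
  have h0 : MvPolynomial.coeff (expandB e) (piB K B f) = 0 := by
    have : piB K B f = 0 := hf
    rw [this, MvPolynomial.coeff_zero]
  rw [coeff_piB, Finset.sum_eq_single_of_mem e' hsupp, if_pos (show expandB e' = _ from he')] at h0
  · exact MvPolynomial.mem_support_iff.mp hsupp h0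
  · intro m hm hne
    rw [if_neg]
    exact fun h => hmin m h (hlead m hm hne)

/-- Each product of generators is represented by a single standard monomial: the difference of
two of them would lie in `J` and have the larger one as its leading monomial. -/
theorem std_unique (o : MonOrd ↥B) {e e' : ↥B →₀ ℕ}
    (he : IsStdMon o.lt (toricJ K B) e) (he' : IsStdMon o.lt (toricJ K B) e')
    (h : expandB e = expandB e') : e = e' := by
  have key : ∀ e e' : ↥B →₀ ℕ, IsStdMon o.lt (toricJ K B) e → expandB e = expandB e' →
      ¬ o.lt e' e := by
    intro e e' he h hlt
    have hne : e' ≠ e := by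
      rintro rfl
      exact o.irrefl _ hlt
    have hce : MvPolynomial.coeff e
        (MvPolynomial.monomial e (1 : K) - MvPolynomial.monomial e' 1) = 1 := by
      rw [MvPolynomial.coeff_sub, MvPolynomial.coeff_monomial, MvPolynomial.coeff_monomial,
        if_pos rfl, if_neg hne, sub_zero]
    refine he (MvPolynomial.monomial e 1 - MvPolynomial.monomial e' 1) ?_ ?_ ⟨?_, ?_⟩
    · change piB K B _ = 0
      rw [map_sub, piB_monomial, piB_monomial, h, sub_self]
    · intro h0
      rw [h0, MvPolynomial.coeff_zero] at hce
      exact zero_ne_one hce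
    · rw [MvPolynomial.mem_support_iff, hce]
      exact one_ne_zero
    · intro m hm hme
      rw [MvPolynomial.mem_support_iff, MvPolynomial.coeff_sub, MvPolynomial.coeff_monomial,
        MvPolynomial.coeff_monomial, if_neg hme.symm] at hm
      by_cases hm' : e' = m
      · exact hm' ▸ hlt
      · simp [hm'] at hm
  by_contra hne
  rcases o.total e e' hne with hlt | hlt
  · exact key e' e he' h.symm hlt
  · exact key e e' he h hlt

end Std

/-! ### The Rees ideal and its binomials -/

section Rees
variable {n : ℕ} (K : Type*) [Field K] (B : Set (Mon n))

/-- The monomial `x^a T^e` of `𝒯`. -/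
noncomputable def xT (a : Mon n) (e : ↥B →₀ ℕ) : MvPolynomial (Fin n ⊕ ↥B) K :=
  MvPolynomial.monomial (a.sumElim e) 1

/-- The ideal generated by the fiber relations and the relations of `T`-degree `1`. -/
noncomputable def fiberQ : Ideal (MvPolynomial (Fin n ⊕ ↥B) K) :=
  Ideal.span ({f | f ∈ reesP K B ∧ OnlyT f} ∪ {f | f ∈ reesP K B ∧ TDegOne f})

theorem xT_add (a b : Mon n) (e e' : ↥B →₀ ℕ) :
    xT K B (a + b) (e + e') = xT K B a e * xT K B b e' := by
  rw [xT, xT, xT, MvPolynomial.monomial_mul, mul_one, Finsupp.sumElim_add]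

variable {B}

theorem sumElim_parts (m : (Fin n ⊕ ↥B) →₀ ℕ) : (sPart m).sumElim (tPart m) = m :=
  Finsupp.sumFinsuppEquivProdFinsupp.symm_apply_apply m

theorem reesPhi_monomial (m : (Fin n ⊕ ↥B) →₀ ℕ) (c : K) :
    reesPhi K B (MvPolynomial.monomial m c)
      = Polynomial.monomial (edeg (tPart m))
          (MvPolynomial.monomial (sPart m + expandB (tPart m)) c) := by
  have hx : ∀ a : Mon n, (a.prod fun i k => (MvPolynomial.X i : MvPolynomial (Fin n) K) ^ k)
      = MvPolynomial.monomial a 1 := fun a => by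
    rw [MvPolynomial.monomial_eq, map_one, one_mul]
  have hX : ∀ e : ↥B →₀ ℕ,
      (e.prod fun _ k => (Polynomial.X : Polynomial (MvPolynomial (Fin n) K)) ^ k)
        = Polynomial.X ^ edeg e := fun e => by
    rw [Finsupp.prod, Finset.prod_pow_eq_pow_sum]
    rfl
  conv_lhs => rw [← sumElim_parts m]
  rw [reesPhi, MvPolynomial.aeval_monomial, Finsupp.prod_sumElim]
  have h1 : ((sPart m).prod ((fun i k => (Sum.elim
      (fun i : Fin n => Polynomial.C (MvPolynomial.X i : MvPolynomial (Fin n) K))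
      (fun u : ↥B => Polynomial.C (MvPolynomial.monomial (u : Mon n) (1 : K)) * Polynomial.X)
      i) ^ k) ∘ Sum.inl)) = Polynomial.C (MvPolynomial.monomial (sPart m) 1) := by
    rw [← hx, Finsupp.prod, Finsupp.prod, map_prod]
    simp
  have h2 : ((tPart m).prod ((fun i k => (Sum.elim
      (fun i : Fin n => Polynomial.C (MvPolynomial.X i : MvPolynomial (Fin n) K))
      (fun u : ↥B => Polynomial.C (MvPolynomial.monomial (u : Mon n) (1 : K)) * Polynomial.X)
      i) ^ k) ∘ Sum.inr))
      = Polynomial.C (MvPolynomial.monomial (expandB (tPart m)) 1)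
        * Polynomial.X ^ edeg (tPart m) := by
    rw [← prod_monomial_pow, ← hX, Finsupp.prod, Finsupp.prod, Finsupp.prod, map_prod,
      ← Finset.prod_mul_distrib]
    simp [mul_pow]
  rw [h1, h2, ← Polynomial.C_mul_X_pow_eq_monomial]
  rw [IsScalarTower.algebraMap_apply K (MvPolynomial (Fin n) K), Polynomial.algebraMap_eq,
    MvPolynomial.algebraMap_eq, ← mul_assoc, ← mul_assoc, ← map_mul, ← map_mul,
    MvPolynomial.C_mul_monomial, MvPolynomial.monomial_mul, mul_one, mul_one]

theorem reesPhi_xT (a : Mon n) (e : ↥B →₀ ℕ) :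
    reesPhi K B (xT K B a e)
      = Polynomial.monomial (edeg e) (MvPolynomial.monomial (a + expandB e) 1) := by
  have h := Finsupp.sumFinsuppEquivProdFinsupp.apply_symm_apply (a, e)
  rw [xT, reesPhi_monomial]
  have h1 : sPart (a.sumElim e) = a := congrArg Prod.fst h
  have h2 : tPart (a.sumElim e) = e := congrArg Prod.snd h
  rw [h1, h2]

theorem sub_mem_reesP {a b : Mon n} {e e' : ↥B →₀ ℕ} (hdeg : edeg e = edeg e')
    (h : a + expandB e = b + expandB e') : xT K B a e - xT K B b e' ∈ reesP K B := by
  change reesPhi K B _ = 0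
  rw [map_sub, reesPhi_xT, reesPhi_xT, hdeg, h, sub_self]

theorem mem_support_xT_sub {a b : Mon n} {e e' : ↥B →₀ ℕ} {m : (Fin n ⊕ ↥B) →₀ ℕ}
    (hm : m ∈ (xT K B a e - xT K B b e').support) : m = a.sumElim e ∨ m = b.sumElim e' := by
  classical
  by_contra! h
  rw [MvPolynomial.mem_support_iff, xT, xT, MvPolynomial.coeff_sub,
    MvPolynomial.coeff_monomial, MvPolynomial.coeff_monomial, if_neg h.1.symm,
    if_neg h.2.symm, sub_zero] at hm
  exact hm rfl

/-- Replacing the `T`-part by one with the same product is a fiber relation. -/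
theorem mk_xT_fiber (a : Mon n) {e e' : ↥B →₀ ℕ} (hdeg : edeg e = edeg e')
    (h : expandB e = expandB e') :
    Ideal.Quotient.mk (fiberQ K B) (xT K B a e) = Ideal.Quotient.mk (fiberQ K B) (xT K B a e') := by
  have hmem : xT K B 0 e - xT K B 0 e' ∈ fiberQ K B := by
    refine Ideal.subset_span (Or.inl ⟨sub_mem_reesP K hdeg (by rw [h]), ?_⟩)
    intro m hm i
    rcases mem_support_xT_sub K hm with rfl | rfl <;> rfl
  rw [Ideal.Quotient.eq]
  have h1 := xT_add K B a 0 0 e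
  have h2 := xT_add K B a 0 0 e'
  rw [add_zero, zero_add] at h1 h2
  rw [h1, h2, ← mul_sub]
  exact Ideal.mul_mem_left _ _ hmem

/-- The relation `x_q T_u - x_j T_v` for `x_q u = x_j v`, multiplied by `x^a T^e`. -/
theorem mk_xT_linear (a : Mon n) (e : ↥B →₀ ℕ) {q j : Fin n} {u v : ↥B}
    (h : Finsupp.single q 1 + (u : Mon n) = Finsupp.single j 1 + (v : Mon n)) :
    Ideal.Quotient.mk (fiberQ K B) (xT K B (a + Finsupp.single q 1) (e + Finsupp.single u 1))
      = Ideal.Quotient.mk (fiberQ K B)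
          (xT K B (a + Finsupp.single j 1) (e + Finsupp.single v 1)) := by
  have hone : ∀ (i : Fin n) (w : ↥B), (∑ s ∈ ((Finsupp.single i 1).sumElim
      (Finsupp.single w 1) : (Fin n ⊕ ↥B) →₀ ℕ).support,
      if s.isRight then ((Finsupp.single i 1).sumElim (Finsupp.single w 1) :
        (Fin n ⊕ ↥B) →₀ ℕ) s else 0) = 1 := by
    intro i w
    change ((Finsupp.single i 1).sumElim (Finsupp.single w 1) : (Fin n ⊕ ↥B) →₀ ℕ).sum
      (fun s k => if s.isRight then k else 0) = 1
    rw [Finsupp.sumElim_single_single, Finsupp.sum_add_index' (by simp), Finsupp.sum_single_index,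
      Finsupp.sum_single_index]
    · simp
    · simp
    · simp
    · intro s k l
      split_ifs <;> rfl
  have hmem : xT K B (Finsupp.single q 1) (Finsupp.single u 1)
      - xT K B (Finsupp.single j 1) (Finsupp.single v 1) ∈ fiberQ K B := by
    refine Ideal.subset_span (Or.inr ⟨sub_mem_reesP K ?_ ?_, ?_⟩)
    · rw [edeg_single, edeg_single]
    · rw [expandB_single, expandB_single, h]
    · intro m hm
      rcases mem_support_xT_sub K hm with rfl | rfl
      · exact hone q u
      · exact hone j v
  rw [Ideal.Quotient.eq, xT_add, xT_add, ← mul_sub]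
  exact Ideal.mul_mem_left _ _ hmem

/-- If monomials with the same image under `φ` are congruent modulo an ideal, then that ideal
contains `P = ker φ`: grouping the terms of `f ∈ P` by their images, the coefficients in each
group add up to zero. -/
theorem mk_eq_zero_of_mem_reesP (Q : Ideal (MvPolynomial (Fin n ⊕ ↥B) K))
    (hQ : ∀ (a b : Mon n) (e e' : ↥B →₀ ℕ), edeg e = edeg e' →
      a + expandB e = b + expandB e' →
      Ideal.Quotient.mk Q (xT K B a e) = Ideal.Quotient.mk Q (xT K B b e'))
    {f : MvPolynomial (Fin n ⊕ ↥B) K} (hf : f ∈ reesP K B) : Ideal.Quotient.mk Q f = 0 := by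
  classical
  set key : ((Fin n ⊕ ↥B) →₀ ℕ) → ℕ × Mon n :=
    fun m => (edeg (tPart m), sPart m + expandB (tPart m)) with hkey
  set val : ((Fin n ⊕ ↥B) →₀ ℕ) → MvPolynomial (Fin n ⊕ ↥B) K ⧸ Q :=
    fun m => Ideal.Quotient.mk Q (MvPolynomial.monomial m 1) with hval
  have hfac : val.FactorsThrough key := by
    intro m m' h
    have h' := hQ (sPart m) (sPart m') (tPart m) (tPart m')
      (congrArg Prod.fst h) (congrArg Prod.snd h)
    rwa [xT, xT, sumElim_parts, sumElim_parts] at h'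
  have hcoeff : ∀ k : ℕ × Mon n,
      ∑ m ∈ f.support with key m = k, MvPolynomial.coeff m f = 0 := by
    intro k
    have h0 : MvPolynomial.coeff k.2 ((reesPhi K B f).coeff k.1) = 0 := by
      have : reesPhi K B f = 0 := hf
      rw [this, Polynomial.coeff_zero, MvPolynomial.coeff_zero]
    rw [f.as_sum, map_sum, Polynomial.finsetSum_coeff, MvPolynomial.coeff_sum] at h0
    rw [Finset.sum_filter]
    refine Eq.trans ?_ h0
    refine Finset.sum_congr rfl fun m _ => ?_
    rw [reesPhi_monomial, Polynomial.coeff_monomial]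
    by_cases h1 : edeg (tPart m) = k.1
    · simp [hkey, Prod.ext_iff, h1, MvPolynomial.coeff_monomial]
    · simp [hkey, Prod.ext_iff, h1]
  have hterm : ∀ m, Ideal.Quotient.mk Q (MvPolynomial.monomial m (MvPolynomial.coeff m f))
      = Ideal.Quotient.mk Q (MvPolynomial.C (MvPolynomial.coeff m f))
        * Function.extend key val 0 (key m) := by
    intro m
    rw [hfac.extend_apply, hval, ← map_mul, MvPolynomial.C_mul_monomial, mul_one]
  rw [f.as_sum, map_sum, Finset.sum_congr rfl fun m _ => hterm m,
    ← Finset.sum_fiberwise_of_maps_to (t := f.support.image key)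
      (fun m hm => Finset.mem_image_of_mem key hm)]
  refine Finset.sum_eq_zero fun k _ => ?_
  rw [Finset.sum_congr rfl (g := fun m =>
    Ideal.Quotient.mk Q (MvPolynomial.C (MvPolynomial.coeff m f)) * Function.extend key val 0 k)
    (fun m hm => by rw [(Finset.mem_filter.mp hm).2]), ← Finset.sum_mul, ← map_sum, ← map_sum,
    hcoeff, map_zero, map_zero, zero_mul]

end Rees

/-! ### Normal forms modulo the fiber and linear relations -/

section Normal
variable {n : ℕ} (K : Type*) [Field K] {B : Set (Mon n)}

/-- `x^a T^e` is normal: `T^e` is standard, and no monomial of the same image under `φ` that is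
congruent to it modulo the fiber and linear relations has a `<_σ`-smaller `x`-part. -/
def IsNormal (σ : MonOrd (Fin n)) (o : MonOrd ↥B) (a : Mon n) (e : ↥B →₀ ℕ) : Prop :=
  IsStdMon o.lt (toricJ K B) e ∧ ∀ (b : Mon n) (e' : ↥B →₀ ℕ), edeg e' = edeg e →
    b + expandB e' = a + expandB e →
    Ideal.Quotient.mk (fiberQ K B) (xT K B b e') = Ideal.Quotient.mk (fiberQ K B) (xT K B a e) →
    ¬ σ.lt b a

theorem exists_normal [Finite ↥B] {d : ℕ} (hd : 0 < d) (hBd : ∀ m ∈ B, mdeg m = d)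
    (σ : MonOrd (Fin n)) (o : MonOrd ↥B) (a : Mon n) (e : ↥B →₀ ℕ) :
    ∃ a' e', IsNormal K σ o a' e' ∧ edeg e' = edeg e ∧ a' + expandB e' = a + expandB e ∧
      Ideal.Quotient.mk (fiberQ K B) (xT K B a' e')
        = Ideal.Quotient.mk (fiberQ K B) (xT K B a e) := by
  obtain ⟨a', ⟨e₁, hdeg₁, hexp₁, hmk₁⟩, hmin⟩ := σ.wf.has_min
    {b | ∃ e' : ↥B →₀ ℕ, edeg e' = edeg e ∧ b + expandB e' = a + expandB e ∧
      Ideal.Quotient.mk (fiberQ K B) (xT K B b e')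
        = Ideal.Quotient.mk (fiberQ K B) (xT K B a e)} ⟨a, e, rfl, rfl, rfl⟩
  obtain ⟨e', hstd, hexp'⟩ := exists_std K o e₁
  have hdeg' : edeg e' = edeg e₁ := by
    apply Nat.eq_of_mul_eq_mul_right hd
    rw [← mdeg_expandB hBd, ← mdeg_expandB hBd, hexp']
  have hmk' := mk_xT_fiber K a' hdeg' hexp'
  refine ⟨a', e', ⟨hstd, fun b e₂ h1 h2 h3 => hmin b ⟨e₂, ?_, ?_, ?_⟩⟩, ?_, ?_, ?_⟩
  · rw [h1, hdeg', hdeg₁]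
  · rw [h2, hexp', hexp₁]
  · rw [h3, hmk', hmk₁]
  · rw [hdeg', hdeg₁]
  · rw [hexp', hexp₁]
  · rw [hmk', hmk₁]

/-- The exchange step: a normal monomial has the `<_σ`-smallest `x`-part among all normal
monomials with the same image. -/
theorem IsNormal.not_lt {σ : MonOrd (Fin n)} {o : MonOrd ↥B}
    (hex : SigmaExchange K B σ.lt o.lt) {a b : Mon n} {e e' : ↥B →₀ ℕ}
    (ha : IsNormal K σ o a e) (hb : IsNormal K σ o b e') (hdeg : edeg e = edeg e')
    (h : a + expandB e = b + expandB e') : ¬ σ.lt b a := by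
  intro hlt
  obtain ⟨u, hu, q, j, hq, hj, hjq, hB⟩ :=
    hex e e' hdeg ha.1 hb.1 (σ.lt_of_add_eq h hlt)
  have hle_u : Finsupp.single j 1 ≤ (u : Mon n) + Finsupp.single q 1 := by
    rw [Finsupp.single_le_iff, Finsupp.add_apply]
    omega
  set v : ↥B := ⟨_, hB⟩ with hv
  have huv : Finsupp.single q 1 + (u : Mon n) = Finsupp.single j 1 + (v : Mon n) := by
    rw [hv, add_tsub_cancel_of_le hle_u, add_comm]
  obtain ⟨e₀, rfl⟩ : ∃ e₀, e = e₀ + Finsupp.single u 1 :=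
    ⟨e - Finsupp.single u 1, (tsub_add_cancel_of_le (by
      rw [Finsupp.single_le_iff]
      omega)).symm⟩
  obtain ⟨a₀, rfl⟩ : ∃ a₀, a = a₀ + Finsupp.single q 1 :=
    ⟨a - Finsupp.single q 1, (tsub_add_cancel_of_le (by
      have := DFunLike.congr_fun h q
      simp only [Finsupp.add_apply] at this
      rw [Finsupp.single_le_iff]
      omega)).symm⟩
  refine ha.2 (a₀ + Finsupp.single j 1) (e₀ + Finsupp.single v 1) ?_ ?_
    (mk_xT_linear K a₀ e₀ huv).symm ?_
  · rw [edeg_add, edeg_add, edeg_single, edeg_single]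
  · rw [expandB_add, expandB_add, expandB_single, expandB_single]
    calc a₀ + Finsupp.single j 1 + (expandB e₀ + (v : Mon n))
        = a₀ + expandB e₀ + (Finsupp.single j 1 + (v : Mon n)) := by abel
      _ = a₀ + Finsupp.single q 1 + (expandB e₀ + (u : Mon n)) := by rw [← huv]; abel
  · have := σ.add_right _ _ a₀ hjq
    rwa [add_comm _ a₀, add_comm _ a₀] at this

end Normal

/-- if the minimal monomial generating set `B` of a monomial ideal `I ⊂ S`
generated in degree `d` satisfies the σ-exchange property for some monomial order `<^#`
on `R = K[{T_u}_{u∈B}]` and some monomial order `<_σ` on `S`, then `I` is of fiber type. -/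
theorem stmt9 {n : ℕ} (hn : 0 < n) (K : Type*) [Field K]
    (d : ℕ) (B : Set (Mon n)) (hBne : B.Nonempty) (hBd : ∀ m ∈ B, mdeg m = d)
    (hex : ∃ (σ : MonOrd (Fin n)) (o : MonOrd ↥B), SigmaExchange K B σ.lt o.lt) :
    IsFiberType K B := by
  obtain ⟨σ, o, hex⟩ := hex
  have : Finite ↥B := finite_of_mdeg hBd
  change reesP K B = fiberQ K B
  refine le_antisymm (fun f hf => ?_) (Ideal.span_le.mpr ?_)
  · refine Ideal.Quotient.eq_zero_iff_mem.mp (mk_eq_zero_of_mem_reesP K _ ?_ hf)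
    intro a b e e' hdeg h
    rcases Nat.eq_zero_or_pos d with rfl | hd
    · have hzero : ∀ e : ↥B →₀ ℕ, expandB e = 0 := by
        intro e
        have h0 := mdeg_expandB hBd e
        rw [mul_zero, mdeg, Finset.sum_eq_zero_iff] at h0
        ext i
        exact h0 i (Finset.mem_univ i)
      -- Every product of generators is `1`, so the `x`-parts agree.
      rw [hzero, hzero, add_zero, add_zero] at h
      subst h
      exact mk_xT_fiber K a hdeg (by rw [hzero, hzero])
    · obtain ⟨a₁, e₁, hn₁, hdeg₁, hexp₁, hmk₁⟩ := exists_normal K hd hBd σ o a e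
      obtain ⟨b₁, e₂, hn₂, hdeg₂, hexp₂, hmk₂⟩ := exists_normal K hd hBd σ o b e'
      have hdeg' : edeg e₁ = edeg e₂ := by rw [hdeg₁, hdeg₂, hdeg]
      have hexp' : a₁ + expandB e₁ = b₁ + expandB e₂ := by rw [hexp₁, hexp₂, h]
      have hab : a₁ = b₁ := by
        by_contra hne
        rcases σ.total _ _ hne with hlt | hlt
        · exact hn₂.not_lt K hex hn₁ hdeg'.symm hexp'.symm hlt
        · exact hn₁.not_lt K hex hn₂ hdeg' hexp' hlt
      subst hab
      rw [← hmk₁, ← hmk₂, std_unique K o hn₁.1 hn₂.1 (add_left_cancel hexp')]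
  · rintro f (⟨hf, -⟩ | ⟨hf, -⟩) <;> exact hf
end
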